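/- Let (T_i)_{i=1}^∞ be a sequence of bounded linear operators from a Banach space X to a normed linear space Y. The following are equivalent: (1) (T_i) is mean sensitive; (2) there exists x∈X with limsup_{n→∞} (1/n)∑_{i=1}^n ‖T_i x‖ = ∞; (3) the set {x∈X : limsup_{n→∞} (1/n)∑_{i=1}^n ‖T_i x‖ = ∞} is residual (comeagre) in X; (4) the set {(x,y)∈X×X : limsup_{n→∞} (1/n)∑_{i=1}^n ‖T_i(x−y)‖ = ∞} is residual in X×X; (5) there exist a bounded sequence (y_k) in X and a sequence (N_k) in ℕ such that sup_k (1/N_k)∑_{i=1}^{N_k} ‖T_i y_k‖ = ∞; (6) there exist a sequence (y_k) in X with y_k → 0 and a sequence (N_k) in ℕ such that liminf_{k→∞} (1/N_k)∑_{i=1}^{N_k} ‖T_i y_k‖ > 0. -/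

import Mathlib

open Filter Topology

variable {X Y : Type*} [NormedAddCommGroup X] [NormedSpace ℝ X]
  [NormedAddCommGroup Y] [NormedSpace ℝ Y]

/-- The Cesàro average `(1/n) ∑_{i=1}^{n} ‖T i x - T i y‖`. -/
noncomputable def mavg (T : ℕ → X →L[ℝ] Y) (x y : X) (n : ℕ) : ℝ :=
  (∑ i ∈ Finset.Icc 1 n, ‖T i x - T i y‖) / n

/-- The Cesàro average `(1/n) ∑_{i=1}^{n} ‖T i x‖`. -/
noncomputable def avg (T : ℕ → X →L[ℝ] Y) (x : X) (n : ℕ) : ℝ :=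
  (∑ i ∈ Finset.Icc 1 n, ‖T i x‖) / n

/-- `limsup_n (1/n) ∑_{i=1}^{n} ‖T i x - T i y‖`, computed in `EReal`. -/
noncomputable def msup (T : ℕ → X →L[ℝ] Y) (x y : X) : EReal :=
  Filter.limsup (fun n => (mavg T x y n : EReal)) Filter.atTop

/-- `liminf_n (1/n) ∑_{i=1}^{n} ‖T i x - T i y‖`, computed in `EReal`. -/
noncomputable def minf (T : ℕ → X →L[ℝ] Y) (x y : X) : EReal :=
  Filter.liminf (fun n => (mavg T x y n : EReal)) Filter.atTop

/-- `limsup_n (1/n) ∑_{i=1}^{n} ‖T i x‖`, computed in `EReal`. -/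
noncomputable def asup (T : ℕ → X →L[ℝ] Y) (x : X) : EReal :=
  Filter.limsup (fun n => (avg T x n : EReal)) Filter.atTop

/-- `liminf_n (1/n) ∑_{i=1}^{n} ‖T i x‖`, computed in `EReal`. -/
noncomputable def ainf (T : ℕ → X →L[ℝ] Y) (x : X) : EReal :=
  Filter.liminf (fun n => (avg T x n : EReal)) Filter.atTop

/-- Mean sensitivity of the sequence `(T i)`. -/
def MeanSensitive (T : ℕ → X →L[ℝ] Y) : Prop :=
  ∃ δ : ℝ, 0 < δ ∧ ∀ x : X, ∀ ε : ℝ, 0 < ε →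
    ∃ y : X, ‖x - y‖ < ε ∧ (δ : EReal) < msup T x y

theorem avg_smul (T : ℕ → X →L[ℝ] Y) (c : ℝ) (x : X) (n : ℕ) :
    avg T (c • x) n = |c| * avg T x n := by
  simp only [avg, map_smul, norm_smul, Real.norm_eq_abs, ← Finset.mul_sum, mul_div_assoc]

theorem avg_add_le (T : ℕ → X →L[ℝ] Y) (x y : X) (n : ℕ) :
    avg T (x + y) n ≤ avg T x n + avg T y n := by
  simp only [avg, ← add_div, ← Finset.sum_add_distrib, map_add]
  gcongr
  exact norm_add_le _ _

theorem avg_neg (T : ℕ → X →L[ℝ] Y) (x : X) (n : ℕ) : avg T (-x) n = avg T x n := by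
  simp [avg]

theorem avg_zero (T : ℕ → X →L[ℝ] Y) (n : ℕ) : avg T 0 n = 0 := by
  simp [avg]

theorem avg_continuous (T : ℕ → X →L[ℝ] Y) (n : ℕ) : Continuous fun x => avg T x n := by
  unfold avg
  fun_prop

theorem mavg_eq (T : ℕ → X →L[ℝ] Y) (x y : X) (n : ℕ) : mavg T x y n = avg T (x - y) n := by
  simp [avg, mavg]

theorem msup_eq (T : ℕ → X →L[ℝ] Y) (x y : X) : msup T x y = asup T (x - y) := by
  simp [msup, asup, mavg_eq]

theorem asup_eq_top_iff (T : ℕ → X →L[ℝ] Y) (x : X) :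
    asup T x = ⊤ ↔ ∀ R : ℝ, ∃ n, R < avg T x n := by
  constructor
  · intro h R
    have h1 : (R : EReal) < asup T x := by rw [h]; exact EReal.coe_lt_top R
    obtain ⟨n, hn⟩ := (frequently_lt_of_lt_limsup (by isBoundedDefault) h1).exists
    exact ⟨n, EReal.coe_lt_coe_iff.1 hn⟩
  · intro h
    rw [EReal.eq_top_iff_forall_lt]
    intro R
    refine lt_of_lt_of_le (EReal.coe_lt_coe_iff.2 (lt_add_one R)) ?_
    refine le_limsup_of_frequently_le ?_ (by isBoundedDefault)
    rw [frequently_atTop]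
    intro m
    obtain ⟨C, hC⟩ := ((Finset.range m).image (avg T x)).bddAbove
    obtain ⟨n, hn⟩ := h (max C (R + 1))
    refine ⟨n, ?_, EReal.coe_le_coe_iff.2 ((le_max_right _ _).trans hn.le)⟩
    by_contra hlt
    have h2 : avg T x n ≤ C := hC (by
      simp only [Finset.coe_image, Set.mem_image, Finset.mem_coe, Finset.mem_range]
      exact ⟨n, by omega, rfl⟩)
    exact absurd ((le_max_left _ _).trans_lt hn) (not_lt.2 h2)

theorem residual_of_unbdd [CompleteSpace X] (T : ℕ → X →L[ℝ] Y) (M : ℝ)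
    (h : ∀ R : ℝ, ∃ (y : X) (n : ℕ), ‖y‖ ≤ M ∧ R < avg T y n) :
    {x : X | asup T x = ⊤} ∈ residual X := by
  have key : ∀ k : ℕ, {x : X | ∃ n, (k : ℝ) < avg T x n} ∈ residual X := by
    intro k
    apply residual_of_dense_open
    · simp only [Set.ofPred_exists]
      exact isOpen_iUnion fun n => isOpen_lt continuous_const (avg_continuous T n)
    · rw [Metric.dense_iff]
      intro x r hr
      by_contra hcon
      have hb : ∀ z ∈ Metric.ball x r, ∀ n, avg T z n ≤ k := by
        intro z hz n
        by_contra hlt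
        exact hcon ⟨z, hz, n, not_le.1 hlt⟩
      set c : ℝ := r / (2 * (|M| + 1)) with hc
      have hMpos : 0 < |M| + 1 := by positivity
      have hcpos : 0 < c := by positivity
      obtain ⟨y, n, hy, hn⟩ := h (2 * k / c)
      have h1 : x + c • y ∈ Metric.ball x r := by
        rw [mem_ball_iff_norm, add_sub_cancel_left, norm_smul, Real.norm_eq_abs, abs_of_pos hcpos]
        have : ‖y‖ ≤ |M| + 1 := by linarith [le_abs_self M]
        calc c * ‖y‖ ≤ c * (|M| + 1) := by gcongr
          _ = r / 2 := by rw [hc]; field_simp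
          _ < r := by linarith
      have h2 := hb _ h1 n
      have h3 := hb x (Metric.mem_ball_self hr) n
      have h4 := avg_add_le T (x + c • y) (-x) n
      rw [add_neg_cancel_comm, avg_neg, avg_smul, abs_of_pos hcpos] at h4
      rw [div_lt_iff₀ hcpos] at hn
      linarith
  have := countable_iInter_mem.2 key
  filter_upwards [this] with x hx
  rw [asup_eq_top_iff]
  intro R
  obtain ⟨k, hk⟩ := exists_nat_gt R
  obtain ⟨n, hn⟩ := Set.mem_iInter.1 hx k
  exact ⟨n, hk.trans hn⟩

/-- **Characterizations of mean sensitivity** for a sequence of bounded linear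
operators from a Banach space to a normed space. -/
theorem meanSensitive_tfae [CompleteSpace X] (T : ℕ → X →L[ℝ] Y) :
    List.TFAE [
      MeanSensitive T,
      ∃ x : X, asup T x = ⊤,
      {x : X | asup T x = ⊤} ∈ residual X,
      {p : X × X | asup T (p.1 - p.2) = ⊤} ∈ residual (X × X),
      ∃ (y : ℕ → X) (N : ℕ → ℕ) (M : ℝ), (∀ k, ‖y k‖ ≤ M) ∧ (∀ k, 1 ≤ N k) ∧
        ∀ R : ℝ, ∃ k, R < avg T (y k) (N k),
      ∃ (y : ℕ → X) (N : ℕ → ℕ), (∀ k, 1 ≤ N k) ∧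
        Filter.Tendsto y Filter.atTop (nhds 0) ∧
        (0 : EReal) < Filter.liminf (fun k => (avg T (y k) (N k) : EReal)) Filter.atTop] := by
  tfae_have 3 → 2 := fun h => (dense_of_mem_residual h).nonempty
  tfae_have 4 → 2 := by
    intro h
    obtain ⟨p, hp⟩ := (dense_of_mem_residual h).nonempty
    exact ⟨_, hp⟩
  tfae_have 2 → 5 := by
    rintro ⟨x, hx⟩
    rw [asup_eq_top_iff] at hx
    choose N hN using fun k : ℕ => hx k
    refine ⟨fun _ => x, N, ‖x‖, fun _ => le_rfl, ?_, ?_⟩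
    · intro k
      by_contra h0
      have h1 : N k = 0 := by omega
      have h2 := hN k
      rw [h1] at h2
      simp only [avg, Nat.cast_zero, div_zero] at h2
      exact absurd h2 (not_lt.2 (Nat.cast_nonneg k))
    · intro R
      obtain ⟨k, hk⟩ := exists_nat_gt R
      exact ⟨k, hk.trans (hN k)⟩
  tfae_have 5 → 3 := by
    rintro ⟨y, N, M, hy, -, hR⟩
    refine residual_of_unbdd T M fun R => ?_
    obtain ⟨k, hk⟩ := hR R
    exact ⟨y k, N k, hy k, hk⟩
  tfae_have 5 → 4 := by
    rintro ⟨y, N, M, hy, -, hR⟩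
    let S : ℕ → (X × X) →L[ℝ] Y := fun i =>
      (T i).comp (ContinuousLinearMap.fst ℝ X X - ContinuousLinearMap.snd ℝ X X)
    refine residual_of_unbdd S M fun R => ?_
    obtain ⟨k, hk⟩ := hR R
    refine ⟨(y k, 0), N k, by simpa [Prod.norm_def] using hy k, ?_⟩
    have : avg S (y k, 0) (N k) = avg T (y k) (N k) := by simp [avg, S]
    rwa [this]
  tfae_have 2 → 1 := by
    rintro ⟨x₀, hx₀⟩
    refine ⟨1, one_pos, fun x ε hε => ?_⟩
    have hpos : 0 < ‖x₀‖ + 1 := by positivity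
    set c : ℝ := ε / (‖x₀‖ + 1) with hc
    have hcpos : 0 < c := by positivity
    refine ⟨x - c • x₀, ?_, ?_⟩
    · rw [sub_sub_cancel, norm_smul, Real.norm_eq_abs, abs_of_pos hcpos]
      calc c * ‖x₀‖ < c * (‖x₀‖ + 1) := by gcongr; linarith
        _ = ε := by rw [hc]; field_simp
    · rw [msup_eq, sub_sub_cancel]
      have : asup T (c • x₀) = ⊤ := by
        rw [asup_eq_top_iff] at hx₀ ⊢
        intro R
        obtain ⟨n, hn⟩ := hx₀ (R / c)
        refine ⟨n, ?_⟩
        rw [avg_smul, abs_of_pos hcpos]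
        rw [div_lt_iff₀ hcpos] at hn
        linarith
      rw [this]
      exact EReal.coe_lt_top _
  tfae_have 1 → 6 := by
    rintro ⟨δ, hδ, h⟩
    have h' : ∀ k : ℕ, ∃ (y : X) (n : ℕ), ‖y‖ < 1 / ((k : ℝ) + 1) ∧ 1 ≤ n ∧ δ < avg T y n := by
      intro k
      obtain ⟨y, hy, hs⟩ := h 0 (1 / ((k : ℝ) + 1)) (by positivity)
      rw [msup_eq] at hs
      obtain ⟨n, hn, h1⟩ := ((frequently_lt_of_lt_limsup (by isBoundedDefault) hs).and_eventually
        (eventually_ge_atTop 1)).exists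
      refine ⟨0 - y, n, hy, h1, EReal.coe_lt_coe_iff.1 hn⟩
    choose y N hy hN hd using h'
    refine ⟨y, N, hN, ?_, ?_⟩
    · exact squeeze_zero_norm (fun k => (hy k).le) tendsto_one_div_add_atTop_nhds_zero_nat
    · refine lt_of_lt_of_le (EReal.coe_lt_coe_iff.2 hδ) ?_
      refine le_liminf_of_le (by isBoundedDefault) (Eventually.of_forall fun k => ?_)
      exact EReal.coe_le_coe_iff.2 (hd k).le
  tfae_have 6 → 5 := by
    rintro ⟨y, N, hN, hy, hl⟩
    obtain ⟨c, hc0, hc⟩ := EReal.lt_iff_exists_real_btwn.1 hl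
    have hc0' : 0 < c := EReal.coe_lt_coe_iff.1 hc0
    have hev := eventually_lt_of_lt_liminf hc (by isBoundedDefault)
    refine ⟨fun k => ‖y k‖⁻¹ • y k, N, 1, fun k => ?_, hN, fun R => ?_⟩
    · rw [norm_smul, norm_inv, norm_norm]
      exact inv_mul_le_one
    · have hpos : 0 < |R| + 1 := by positivity
      have hsm : ∀ᶠ k in atTop, ‖y k‖ < c / (|R| + 1) :=
        (tendsto_zero_iff_norm_tendsto_zero.1 hy).eventually_lt_const (by positivity)
      obtain ⟨k, hk1, hk2⟩ := (hev.and hsm).exists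
      have hk1' : c < avg T (y k) (N k) := EReal.coe_lt_coe_iff.1 hk1
      refine ⟨k, ?_⟩
      have hne : y k ≠ 0 := by
        intro h0
        rw [h0, avg_zero] at hk1'
        linarith
      have hnp : 0 < ‖y k‖ := norm_pos_iff.2 hne
      rw [avg_smul, abs_of_pos (by positivity), inv_mul_eq_div, lt_div_iff₀ hnp]
      rw [lt_div_iff₀ hpos] at hk2
      nlinarith [le_abs_self R]
  tfae_finish
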